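/- arXiv:1208.5273 — 2 statements merged into one kernel-verified Lean document; each statement's English description precedes it below -/
import Mathlib

section
/- Discrete terminated convergence. Let ω be a regular averaging kernel with Δ-discretization ω̂, and let (hf, hg) ∈ 𝒳² satisfy the strictly positive gap condition with A(hf, hg) > Δ‖ω‖∞. Then for the one-sided termination of the discrete spatially coupled recursion with any initial condition f⁰ : {x_i = iΔ} → [0,1], f^t(x_i) → 0 as t → ∞ for every i. -/
open MeasureTheory Filter Set

noncomputable section

/-- Convolution `(f ⊗ ω)(x) = ∫ y, f y · ω (x − y)`. -/
def conv (f ω : ℝ → ℝ) (x : ℝ) : ℝ := ∫ y : ℝ, f y * ω (x - y)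

/-- `ω` is an averaging kernel: even, nonnegative, of bounded variation, integrating to 1. -/
def IsAveragingKernel (ω : ℝ → ℝ) : Prop :=
  (∀ x, ω (-x) = ω x) ∧ (∀ x, 0 ≤ ω x) ∧ BoundedVariationOn ω Set.univ ∧
    MeasureTheory.Integrable ω ∧ (∫ x : ℝ, ω x) = 1

/-- The essential supremum `‖ω‖∞` of a kernel, as a real number. -/
def kerSup (ω : ℝ → ℝ) : ℝ := (eLpNorm ω ⊤ MeasureTheory.volume).toReal

/-- `ω` is regular: for some `W ∈ (0,∞]`, it vanishes outside `[−W, W]` and is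
positive on `(−W, W)` (the case `W = ∞` being that `ω` is everywhere positive). -/
def IsRegularKernel (ω : ℝ → ℝ) : Prop :=
  (∀ x, 0 < ω x) ∨
    ∃ W : ℝ, 0 < W ∧ (∀ x, W < |x| → ω x = 0) ∧ (∀ x, |x| < W → 0 < ω x)

/-- Membership in `𝒳`: nondecreasing self-maps of `[0,1]`. -/
def MemX (h : ℝ → ℝ) : Prop :=
  MonotoneOn h (Icc 0 1) ∧ MapsTo h (Icc 0 1) (Icc 0 1)

/-- Left limit `h(u−)` of `h ∈ 𝒳` at `u ∈ [0,1]`, with the convention `h(0−) = 0`. -/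
def lm (h : ℝ → ℝ) (u : ℝ) : ℝ := if u ≤ 0 then 0 else sSup (h '' Ico 0 u)

/-- Right limit `h(u+)` of `h ∈ 𝒳` at `u ∈ [0,1]`, with the convention `h(1+) = 1`. -/
def rm (h : ℝ → ℝ) (u : ℝ) : ℝ := if 1 ≤ u then 1 else sInf (h '' Ioc u 1)

/-- A canonical generalized inverse of `h ∈ 𝒳` (any valid inverse has the same integrals,
so the potential below is unambiguous). -/
def Xinv (h : ℝ → ℝ) (v : ℝ) : ℝ := sInf ({1} ∪ {u ∈ Icc (0:ℝ) 1 | v ≤ h u})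

/-- The potential `Φ(hf, hg; u, v) = ∫₀ᵘ hg⁻¹ + ∫₀ᵛ hf⁻¹ − u·v`. -/
def Pot (hf hg : ℝ → ℝ) (u v : ℝ) : ℝ :=
  (∫ x in (0:ℝ)..u, Xinv hg x) + (∫ x in (0:ℝ)..v, Xinv hf x) - u * v

/-- `A(hf, hg) = Φ(hf, hg; 1, 1)`. -/
def Agap (hf hg : ℝ → ℝ) : ℝ := Pot hf hg 1 1

/-- `(u,v)` is a crossing point of `(hf, hg)`:
`u ∈ [hg(v−), hg(v+)]` and `v ∈ [hf(u−), hf(u+)]`. -/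
def IsCrossing (hf hg : ℝ → ℝ) (u v : ℝ) : Prop :=
  u ∈ Icc (0:ℝ) 1 ∧ v ∈ Icc (0:ℝ) 1 ∧
    u ∈ Icc (lm hg v) (rm hg v) ∧ v ∈ Icc (lm hf u) (rm hf u)

/-- The strictly positive gap condition: there is a nontrivial crossing point, and every
nontrivial crossing point satisfies `Φ(hf, hg; u, v) > max {0, A(hf, hg)}`. -/
def StrictPosGap (hf hg : ℝ → ℝ) : Prop :=
  (∃ u v, IsCrossing hf hg u v ∧ ¬(u = 0 ∧ v = 0) ∧ ¬(u = 1 ∧ v = 1)) ∧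
    ∀ u v, IsCrossing hf hg u v → ¬(u = 0 ∧ v = 0) → ¬(u = 1 ∧ v = 1) →
      max 0 (Agap hf hg) < Pot hf hg u v

/-- Membership in `Ψ`: nondecreasing functions `ℝ → [0,1]`. -/
def MemPsi (f : ℝ → ℝ) : Prop := Monotone f ∧ ∀ x, f x ∈ Icc (0:ℝ) 1

/-- `f` is `(a,b)`-interpolating: limits `a` at `−∞` and `b` at `+∞`. -/
def Interpolates (f : ℝ → ℝ) (a b : ℝ) : Prop :=
  Filter.Tendsto f Filter.atBot (nhds a) ∧ Filter.Tendsto f Filter.atTop (nhds b)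

/-- The `Δ`-discretization `ω̂ᵢ = ∫_{(i−1/2)Δ}^{(i+1/2)Δ} ω(z) dz` of a kernel. -/
def dker (ω : ℝ → ℝ) (Δ : ℝ) (i : ℤ) : ℝ :=
  ∫ z in (((i : ℝ) - 1/2) * Δ)..(((i : ℝ) + 1/2) * Δ), ω z

/-- Discrete convolution `(f ⊗ ω̂)(xᵢ) = Σⱼ ω̂_{i−j} f(xⱼ)`. -/
def dconv (f : ℤ → ℝ) (ωh : ℤ → ℝ) (i : ℤ) : ℝ := ∑' j : ℤ, ωh (i - j) * f j

/-!
Start the recursion from the all-one profile, which dominates every other run. Its iterates are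
monotone in space and decrease in time, so they converge to profiles `F`, `G` with `F = 0` to the
left of the origin, which solve the recursion up to filling in the jumps of `hf` and `hg`. The
limits `v` of `F` and `u` of `G` at `+∞` form a crossing point `(u, v)`.

Write `δ` for the backward difference in space. Comparing `∫ hf⁻¹` and `∫ hg⁻¹` with upper Riemann
sums along `F` and `G` gives `Φ(u, v) ≤ ∑ δF · (G ⊗ ω̂) + ∑ δG · (F ⊗ ω̂) - u v`. As `ω̂` is even,
the second sum equals `∑ F · δ(G ⊗ ω̂)`, and the discrete product rule turns the total into a
telescoping sum, at most `u v`, plus the sum of `δF · δ(G ⊗ ω̂)`, at most `(sup ω̂) u v`. Hence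
`Φ(u, v) ≤ (sup ω̂) u v`, which the gap condition excludes unless `v = 0`, that is, `F = 0`.
-/

open scoped Topology

section Order

lemma monotoneOn_iterate {α : Type*} [Preorder α] {T : α → α} {s : Set α}
    (hT : MonotoneOn T s) (hs : MapsTo T s s) (n : ℕ) : MonotoneOn T^[n] s := by
  induction n with
  | zero => exact monotone_id.monotoneOn s
  | succ n ih => exact ih.comp hT hs

lemma antitone_iterate_right_endpoint {α : Type*} [Preorder α] {T : α → α} {a b : α}
    (hT : MonotoneOn T (Icc a b)) (hs : MapsTo T (Icc a b) (Icc a b)) (hab : a ≤ b) :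
    Antitone fun n => T^[n] b :=
  antitone_nat_of_succ_le fun n =>
    monotoneOn_iterate hT hs n (hs (right_mem_Icc.2 hab)) (right_mem_Icc.2 hab)
      (hs (right_mem_Icc.2 hab)).2

lemma monotone_indicator_Ici {α M : Type*} [Preorder α] [Preorder M] [Zero M] {φ : α → M}
    (hφ : Monotone φ) (φ0 : 0 ≤ φ) (a : α) : Monotone ((Ici a).indicator φ) := by
  intro i j hij
  by_cases hi : i ∈ Ici a
  · have hj : j ∈ Ici a := le_trans hi hij
    simpa only [indicator_of_mem hi, indicator_of_mem hj] using hφ hij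
  · rw [indicator_of_notMem hi]
    exact indicator_nonneg (fun k _ => φ0 k) j

end Order

lemma summable_mul_of_nonneg_of_le {ι : Type*} {a f : ι → ℝ} {b : ℝ} (ha : Summable a)
    (a0 : 0 ≤ a) (f0 : 0 ≤ f) (fb : ∀ i, f i ≤ b) : Summable fun i => a i * f i :=
  .of_nonneg_of_le (fun i => mul_nonneg (a0 i) (f0 i))
    (fun i => mul_le_mul_of_nonneg_left (fb i) (a0 i)) (ha.mul_right b)

section BackwardDiff

/-- The increment `f i - f (i - 1)` of a sequence indexed by `ℤ`. It plays the role of the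
Stieltjes measure `df` of a spatial profile `f`. -/
def backwardDiff (f : ℤ → ℝ) (i : ℤ) : ℝ := f i - f (i - 1)

variable {f g : ℤ → ℝ} {a b : ℝ}

lemma backwardDiff_nonneg (hf : Monotone f) : 0 ≤ backwardDiff f :=
  fun i => sub_nonneg.2 (hf (by lia))

lemma backwardDiff_mul (f g : ℤ → ℝ) (i : ℤ) :
    backwardDiff (fun j => f j * g j) i + backwardDiff f i * backwardDiff g i =
      backwardDiff f i * g i + f i * backwardDiff g i := by
  unfold backwardDiff
  ring

lemma sum_Ioc_backwardDiff (f : ℤ → ℝ) {m n : ℤ} (hmn : m ≤ n) :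
    ∑ i ∈ Finset.Ioc m n, backwardDiff f i = f n - f m := by
  induction n, hmn using Int.leInduction with
  | base => simp
  | succ n hmn ih =>
    rw [← Finset.insert_Ioc_right_eq_Ioc_add_one hmn, Finset.sum_insert (by simp), ih,
      backwardDiff, add_sub_cancel_right]
    ring

lemma exists_subset_Ioc (I : Finset ℤ) : ∃ m n : ℤ, m ≤ n ∧ I ⊆ Finset.Ioc m n := by
  obtain ⟨m, hm⟩ := I.bddBelow
  obtain ⟨n, hn⟩ := I.bddAbove
  refine ⟨m - 1, max (m - 1) n, le_max_left _ _, fun i hi => Finset.mem_Ioc.2 ⟨?_, ?_⟩⟩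
  · exact Int.sub_one_lt_of_le (hm hi)
  · exact (hn hi).trans (le_max_right _ _)

lemma sum_backwardDiff_le (hf : Monotone f) (hfab : ∀ i, f i ∈ Icc a b) (I : Finset ℤ) :
    ∑ i ∈ I, backwardDiff f i ≤ b - a := by
  obtain ⟨m, n, hmn, hI⟩ := exists_subset_Ioc I
  calc ∑ i ∈ I, backwardDiff f i
      ≤ ∑ i ∈ Finset.Ioc m n, backwardDiff f i :=
        Finset.sum_le_sum_of_subset_of_nonneg hI fun i _ _ => backwardDiff_nonneg hf i
    _ = f n - f m := sum_Ioc_backwardDiff f hmn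
    _ ≤ b - a := sub_le_sub (hfab n).2 (hfab m).1

lemma summable_backwardDiff (hf : Monotone f) (hfab : ∀ i, f i ∈ Icc a b) :
    Summable (backwardDiff f) :=
  summable_of_sum_le (backwardDiff_nonneg hf) (sum_backwardDiff_le hf hfab)

lemma tsum_backwardDiff_le (hf : Monotone f) (hfab : ∀ i, f i ∈ Icc a b) :
    ∑' i, backwardDiff f i ≤ b - a :=
  (summable_backwardDiff hf hfab).tsum_le_of_sum_le (sum_backwardDiff_le hf hfab)

lemma tsum_backwardDiff_mul_add_le (hf : Monotone f) (f0 : 0 ≤ f) (fa : ∀ i, f i ≤ a)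
    (hg : Monotone g) (g0 : 0 ≤ g) (gb : ∀ i, g i ≤ b) {D : ℝ} (gD : ∀ i, backwardDiff g i ≤ D) :
    ∑' i, backwardDiff f i * g i + ∑' i, f i * backwardDiff g i ≤ a * b + D * a := by
  have a0 : 0 ≤ a := (f0 0).trans (fa 0)
  have df0 := backwardDiff_nonneg hf
  have dg0 := backwardDiff_nonneg hg
  have df_summable := summable_backwardDiff hf fun i => ⟨f0 i, fa i⟩
  have dg_summable := summable_backwardDiff hg fun i => ⟨g0 i, gb i⟩
  have dfg_summable : Summable fun i => backwardDiff f i * g i :=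
    summable_mul_of_nonneg_of_le df_summable df0 g0 gb
  have fdg_summable : Summable fun i => f i * backwardDiff g i := by
    simpa only [mul_comm] using summable_mul_of_nonneg_of_le dg_summable dg0 f0 fa
  have dfdg_summable : Summable fun i => backwardDiff f i * backwardDiff g i :=
    summable_mul_of_nonneg_of_le df_summable df0 dg0 gD
  have fg_mono : Monotone fun i => f i * g i := hf.mul hg f0 g0
  have fg_mem (i : ℤ) : f i * g i ∈ Icc 0 (a * b) :=
    ⟨mul_nonneg (f0 i) (g0 i), mul_le_mul (fa i) (gb i) (g0 i) a0⟩
  calc ∑' i, backwardDiff f i * g i + ∑' i, f i * backwardDiff g i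
      = ∑' i, backwardDiff (fun j => f j * g j) i + ∑' i, backwardDiff f i * backwardDiff g i := by
        rw [← dfg_summable.tsum_add fdg_summable,
          ← (summable_backwardDiff fg_mono fg_mem).tsum_add dfdg_summable]
        exact tsum_congr fun i => (backwardDiff_mul f g i).symm
    _ ≤ (a * b - 0) + ∑' i, backwardDiff f i * D :=
        add_le_add (tsum_backwardDiff_le fg_mono fg_mem) (dfdg_summable.tsum_le_tsum
          (fun i => mul_le_mul_of_nonneg_left (gD i) (df0 i)) (df_summable.mul_right D))
    _ ≤ a * b + (a - 0) * D := by
        rw [sub_zero, tsum_mul_right]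
        have D0 : 0 ≤ D := (dg0 0).trans (gD 0)
        gcongr
        exact tsum_backwardDiff_le hf fun i => ⟨f0 i, fa i⟩
    _ = a * b + D * a := by rw [sub_zero, mul_comm a D]

end BackwardDiff

section RiemannSum

variable {φ : ℝ → ℝ} {x y : ℤ → ℝ} {b : ℝ}

lemma intervalIntegral_le_of_monotone (hφ : Monotone φ) {s t : ℝ} (hst : s ≤ t) :
    ∫ z in s..t, φ z ≤ (t - s) * φ t := by
  calc ∫ z in s..t, φ z
      ≤ ∫ _ in s..t, φ t := intervalIntegral.integral_mono_on hst hφ.intervalIntegrable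
        intervalIntegrable_const fun z hz => hφ hz.2
    _ = (t - s) * φ t := by rw [intervalIntegral.integral_const, smul_eq_mul]

lemma intervalIntegral_le_sum_Ioc (hφ : Monotone φ) (hy : Monotone y)
    (hyx : ∀ i, φ (y i) ≤ x i) {m n : ℤ} (hmn : m ≤ n) :
    ∫ z in y m..y n, φ z ≤ ∑ i ∈ Finset.Ioc m n, backwardDiff y i * x i := by
  have integral_sub (s t : ℝ) :
      (∫ z in (0 : ℝ)..t, φ z) - ∫ z in (0 : ℝ)..s, φ z = ∫ z in s..t, φ z :=
    intervalIntegral.integral_interval_sub_left hφ.intervalIntegrable hφ.intervalIntegrable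
  rw [← integral_sub, ← sum_Ioc_backwardDiff (fun i => ∫ z in (0 : ℝ)..y i, φ z) hmn]
  refine Finset.sum_le_sum fun i _ => ?_
  have y_le : y (i - 1) ≤ y i := hy (by lia)
  calc backwardDiff (fun i => ∫ z in (0 : ℝ)..y i, φ z) i
      = ∫ z in y (i - 1)..y i, φ z := integral_sub _ _
    _ ≤ (y i - y (i - 1)) * φ (y i) := intervalIntegral_le_of_monotone hφ y_le
    _ ≤ backwardDiff y i * x i := mul_le_mul_of_nonneg_left (hyx i) (sub_nonneg.2 y_le)

lemma intervalIntegral_le_tsum (hφ : Monotone φ) (hy : Monotone y) (y0 : 0 ≤ y) (x0 : 0 ≤ x)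
    (hyx : ∀ i, φ (y i) ≤ x i) (hbot : Tendsto (fun i => y i * x i) atBot (𝓝 0))
    (htop : Tendsto y atTop (𝓝 b)) (hs : Summable fun i => backwardDiff y i * x i) :
    ∫ z in (0 : ℝ)..b, φ z ≤ ∑' i, backwardDiff y i * x i := by
  have cont : Continuous fun t => ∫ z in (0 : ℝ)..t, φ z :=
    intervalIntegral.continuous_primitive (fun _ _ => hφ.intervalIntegrable) 0
  refine le_of_tendsto' ((cont.tendsto b).comp htop) fun n => ?_
  have lim : Tendsto (fun m => y m * x m + ∑' i, backwardDiff y i * x i) atBot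
      (𝓝 (∑' i, backwardDiff y i * x i)) := by
    simpa only [zero_add] using hbot.add_const (∑' i, backwardDiff y i * x i)
  refine ge_of_tendsto lim ((eventually_le_atBot n).mono fun m hmn => ?_)
  calc ∫ z in (0 : ℝ)..y n, φ z
      = (∫ z in (0 : ℝ)..y m, φ z) + ∫ z in y m..y n, φ z :=
        (intervalIntegral.integral_add_adjacent_intervals hφ.intervalIntegrable
          hφ.intervalIntegrable).symm
    _ ≤ (y m - 0) * φ (y m) + ∑ i ∈ Finset.Ioc m n, backwardDiff y i * x i :=
        add_le_add (intervalIntegral_le_of_monotone hφ (y0 m))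
          (intervalIntegral_le_sum_Ioc hφ hy hyx hmn)
    _ ≤ y m * x m + ∑' i, backwardDiff y i * x i := by
        rw [sub_zero]
        exact add_le_add (mul_le_mul_of_nonneg_left (hyx m) (y0 m))
          (hs.sum_le_tsum _ fun i _ => mul_nonneg (backwardDiff_nonneg hy i) (x0 i))

end RiemannSum

section CompletedGraph

/-- The graph of `h : [0,1] → [0,1]` with its jumps filled in: the points `(x, y)` of the unit
square with `y ∈ [h(x-), h(x+)]`. The one-sided limits are expressed through the values of `h` on
either side of `x`, which makes the set visibly closed. -/
def completedGraph (h : ℝ → ℝ) : Set (ℝ × ℝ) :=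
  {q ∈ Icc (0 : ℝ) 1 ×ˢ Icc (0 : ℝ) 1 |
    ∀ w ∈ Icc (0 : ℝ) 1, (w < q.1 → h w ≤ q.2) ∧ (q.1 < w → q.2 ≤ h w)}

variable {h hf hg : ℝ → ℝ} {x y u v : ℝ}

lemma isClosed_completedGraph (h : ℝ → ℝ) : IsClosed (completedGraph h) := by
  have closed_cond (w : ℝ) :
      IsClosed {q : ℝ × ℝ | (w < q.1 → h w ≤ q.2) ∧ (q.1 < w → q.2 ≤ h w)} :=
    (isClosed_imp (isOpen_lt continuous_const continuous_fst)
      (isClosed_le continuous_const continuous_snd)).inter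
    (isClosed_imp (isOpen_lt continuous_fst continuous_const)
      (isClosed_le continuous_snd continuous_const))
  have closed_forall : IsClosed {q : ℝ × ℝ | ∀ w ∈ Icc (0 : ℝ) 1,
      (w < q.1 → h w ≤ q.2) ∧ (q.1 < w → q.2 ≤ h w)} := by
    convert! isClosed_biInter fun w (_ : w ∈ Icc (0 : ℝ) 1) => closed_cond w using 1
    ext q
    simp only [mem_iInter, mem_ofPred_eq]
  exact (isClosed_Icc.prod isClosed_Icc).inter closed_forall

lemma MemX.mk_mem_completedGraph (hh : MemX h) (hx : x ∈ Icc (0 : ℝ) 1) :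
    (x, h x) ∈ completedGraph h :=
  ⟨⟨hx, hh.2 hx⟩, fun _ hw => ⟨fun hlt => hh.1 hw hx hlt.le, fun hlt => hh.1 hx hw hlt.le⟩⟩

lemma lm_le_of_mem_completedGraph (hxy : (x, y) ∈ completedGraph h) : lm h x ≤ y := by
  obtain ⟨⟨hx, hy⟩, hh⟩ := hxy
  unfold lm
  split_ifs with x_nonpos
  · exact hy.1
  · refine csSup_le (Nonempty.image _ ⟨0, le_rfl, not_le.1 x_nonpos⟩) ?_
    rintro _ ⟨w, hw, rfl⟩
    exact (hh w ⟨hw.1, hw.2.le.trans hx.2⟩).1 hw.2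

lemma le_rm_of_mem_completedGraph (hxy : (x, y) ∈ completedGraph h) : y ≤ rm h x := by
  obtain ⟨⟨hx, hy⟩, hh⟩ := hxy
  unfold rm
  split_ifs with one_le_x
  · exact hy.2
  · refine le_csInf (Nonempty.image _ ⟨1, not_le.1 one_le_x, le_rfl⟩) ?_
    rintro _ ⟨w, hw, rfl⟩
    exact (hh w ⟨hx.1.trans hw.1.le, hw.2⟩).2 hw.1

lemma isCrossing_of_mem_completedGraph (hu : (v, u) ∈ completedGraph hg)
    (hv : (u, v) ∈ completedGraph hf) : IsCrossing hf hg u v :=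
  ⟨hv.1.1, hu.1.1, ⟨lm_le_of_mem_completedGraph hu, le_rm_of_mem_completedGraph hu⟩,
    ⟨lm_le_of_mem_completedGraph hv, le_rm_of_mem_completedGraph hv⟩⟩

end CompletedGraph

section GeneralizedInverse

variable {h : ℝ → ℝ} {u v x y : ℝ}

lemma zero_mem_lowerBounds_Xinv (h : ℝ → ℝ) (v : ℝ) :
    0 ∈ lowerBounds ({1} ∪ {u ∈ Icc (0 : ℝ) 1 | v ≤ h u}) := by
  rintro u (rfl | hu)
  exacts [zero_le_one, hu.1.1]

lemma Xinv_nonneg (h : ℝ → ℝ) (v : ℝ) : 0 ≤ Xinv h v :=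
  le_csInf ⟨1, Or.inl rfl⟩ (zero_mem_lowerBounds_Xinv h v)

lemma Xinv_le_one (h : ℝ → ℝ) (v : ℝ) : Xinv h v ≤ 1 :=
  csInf_le ⟨0, zero_mem_lowerBounds_Xinv h v⟩ (Or.inl rfl)

lemma Xinv_le_of_le (hu : u ∈ Icc (0 : ℝ) 1) (hv : v ≤ h u) : Xinv h v ≤ u :=
  csInf_le ⟨0, zero_mem_lowerBounds_Xinv h v⟩ (Or.inr ⟨hu, hv⟩)

lemma monotone_Xinv (h : ℝ → ℝ) : Monotone (Xinv h) := fun v _ hvw =>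
  csInf_le_csInf ⟨0, zero_mem_lowerBounds_Xinv h v⟩ ⟨1, Or.inl rfl⟩
    (union_subset_union_right _ fun _ hu => ⟨hu.1, hvw.trans hu.2⟩)

lemma Xinv_zero (h0 : 0 ≤ h 0) : Xinv h 0 = 0 :=
  le_antisymm (Xinv_le_of_le ⟨le_rfl, zero_le_one⟩ h0) (Xinv_nonneg h 0)

lemma Xinv_le_of_mem_completedGraph (hxy : (x, y) ∈ completedGraph h) : Xinv h y ≤ x := by
  obtain ⟨⟨hx, -⟩, hh⟩ := hxy
  refine le_of_forall_gt_imp_ge_of_dense fun w hxw => ?_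
  rcases le_total w 1 with hw | hw
  · have w_mem : w ∈ Icc (0 : ℝ) 1 := ⟨hx.1.trans hxw.le, hw⟩
    exact Xinv_le_of_le w_mem ((hh w w_mem).2 hxw)
  · exact (Xinv_le_one h y).trans hw

end GeneralizedInverse

/-- A probability distribution on `ℤ` that is symmetric about `0`: the discrete counterpart of an
averaging kernel. -/
structure IsDiscreteKernel (p : ℤ → ℝ) : Prop where
  nonneg : 0 ≤ p
  hasSum_one : HasSum p 1
  even : ∀ n, p (-n) = p n

section Discretization

variable {ω : ℝ → ℝ} {Δ : ℝ}

lemma dker_nonneg (hω : 0 ≤ ω) (hΔ : 0 ≤ Δ) : 0 ≤ dker ω Δ := fun n =>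
  intervalIntegral.integral_nonneg (mul_le_mul_of_nonneg_right (by linarith) hΔ) fun x _ => hω x

lemma dker_neg (hω : ∀ x, ω (-x) = ω x) (n : ℤ) : dker ω Δ (-n) = dker ω Δ n := by
  have reflect := intervalIntegral.integral_comp_neg (a := ((-n : ℤ) - 1 / 2 : ℝ) * Δ)
    (b := ((-n : ℤ) + 1 / 2 : ℝ) * Δ) ω
  simp only [hω] at reflect
  unfold dker
  rw [reflect]
  push_cast
  congr 1 <;> ring

lemma hasSum_dker (hω : Integrable ω) (hΔ : 0 < Δ) : HasSum (dker ω Δ) (∫ x, ω x) := by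
  have rescaled := ((hω.comp_mul_right' hΔ.ne').hasSum_intervalIntegral (-1 / 2)).mul_right Δ
  have total : (∫ x, ω (x * Δ)) * Δ = ∫ x, ω x := by
    rw [Measure.integral_comp_mul_right, abs_of_pos (inv_pos.2 hΔ), smul_eq_mul, mul_right_comm,
      inv_mul_cancel₀ hΔ.ne', one_mul]
  rw [total] at rescaled
  convert! rescaled using 2 with n
  rw [intervalIntegral.integral_comp_mul_right _ hΔ.ne', smul_eq_mul, mul_right_comm,
    inv_mul_cancel₀ hΔ.ne', one_mul, dker]
  congr 1 <;> ring

lemma dker_le (hω : Integrable ω) (hΔ : 0 ≤ Δ) {M : ℝ} (hM : ∀ᵐ x, ω x ≤ M) (n : ℤ) :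
    dker ω Δ n ≤ Δ * M := by
  calc dker ω Δ n
      ≤ ∫ _ in ((n : ℝ) - 1 / 2) * Δ..((n : ℝ) + 1 / 2) * Δ, M :=
        intervalIntegral.integral_mono_ae (mul_le_mul_of_nonneg_right (by linarith) hΔ)
          hω.intervalIntegrable intervalIntegrable_const hM
    _ = Δ * M := by
        rw [intervalIntegral.integral_const, smul_eq_mul]
        ring

lemma eLpNorm_top_lt_top_of_boundedVariationOn (hω : BoundedVariationOn ω univ) :
    eLpNorm ω ⊤ volume < ⊤ := by
  refine eLpNormEssSup_lt_top_of_ae_bound (C := |ω 0| + (eVariationOn ω univ).toReal)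
    (Eventually.of_forall fun x => ?_)
  have dist_le := hω.dist_le (mem_univ x) (mem_univ 0)
  rw [Real.dist_eq] at dist_le
  rw [Real.norm_eq_abs]
  linarith [abs_sub_abs_le_abs_sub (ω x) (ω 0)]

lemma ae_le_kerSup (hω : eLpNorm ω ⊤ volume < ⊤) : ∀ᵐ x, ω x ≤ kerSup ω := by
  filter_upwards [ae_le_eLpNormEssSup (f := ω) (μ := volume)] with x hx
  calc ω x ≤ ‖ω x‖ := le_abs_self _
    _ = ‖ω x‖ₑ.toReal := (toReal_enorm _).symm
    _ ≤ kerSup ω := ENNReal.toReal_mono hω.ne hx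

lemma IsAveragingKernel.isDiscreteKernel_dker (hω : IsAveragingKernel ω) (hΔ : 0 < Δ) :
    IsDiscreteKernel (dker ω Δ) := by
  obtain ⟨even, nonneg, -, integrable, integral_eq_one⟩ := hω
  exact ⟨dker_nonneg nonneg hΔ.le, integral_eq_one ▸ hasSum_dker integrable hΔ, dker_neg even⟩

lemma IsAveragingKernel.dker_le_mul_kerSup (hω : IsAveragingKernel ω) (hΔ : 0 ≤ Δ) (n : ℤ) :
    dker ω Δ n ≤ Δ * kerSup ω := by
  obtain ⟨-, -, bv, integrable, -⟩ := hω
  exact dker_le integrable hΔ (ae_le_kerSup (eLpNorm_top_lt_top_of_boundedVariationOn bv)) n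

end Discretization

section Convolution

lemma dconv_comp_add_right (f p : ℤ → ℝ) (n i : ℤ) :
    dconv (fun j => f (j + n)) p i = dconv f p (i + n) := by
  unfold dconv
  rw [← (Equiv.addRight n).tsum_eq fun j => p (i + n - j) * f j]
  simp only [Equiv.coe_addRight, add_sub_add_right_eq_sub]

namespace IsDiscreteKernel

variable {p f g : ℤ → ℝ} {a b C : ℝ}

lemma hasSum_sub (hp : IsDiscreteKernel p) (i : ℤ) : HasSum (fun j => p (i - j)) 1 :=
  (Equiv.subLeft i).hasSum_iff.2 hp.hasSum_one

lemma summable_mul (hp : IsDiscreteKernel p) (f0 : 0 ≤ f) (fb : ∀ i, f i ≤ b) (i : ℤ) :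
    Summable fun j => p (i - j) * f j :=
  summable_mul_of_nonneg_of_le (hp.hasSum_sub i).summable (fun j => hp.nonneg (i - j)) f0 fb

lemma dconv_nonneg (hp : IsDiscreteKernel p) (f0 : 0 ≤ f) : 0 ≤ dconv f p :=
  fun _ => tsum_nonneg fun j => mul_nonneg (hp.nonneg _) (f0 j)

lemma dconv_mono (hp : IsDiscreteKernel p) (f0 : 0 ≤ f) (hfg : f ≤ g) (gb : ∀ i, g i ≤ b) :
    dconv f p ≤ dconv g p := fun i =>
  (hp.summable_mul f0 (fun j => (hfg j).trans (gb j)) i).tsum_le_tsum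
    (fun j => mul_le_mul_of_nonneg_left (hfg j) (hp.nonneg _))
    (hp.summable_mul (f0.trans hfg) gb i)

lemma dconv_const (hp : IsDiscreteKernel p) (b : ℝ) (i : ℤ) : dconv (fun _ => b) p i = b := by
  rw [dconv, tsum_mul_right, (hp.hasSum_sub i).tsum_eq, one_mul]

lemma dconv_le (hp : IsDiscreteKernel p) (f0 : 0 ≤ f) (fb : ∀ i, f i ≤ b) (i : ℤ) :
    dconv f p i ≤ b :=
  (hp.dconv_mono f0 (g := fun _ => b) fb (fun _ => le_rfl) i).trans_eq (hp.dconv_const b i)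

lemma monotone_dconv (hp : IsDiscreteKernel p) (f0 : 0 ≤ f) (fb : ∀ i, f i ≤ b)
    (hf : Monotone f) : Monotone (dconv f p) := fun i k hik => by
  obtain ⟨n, rfl⟩ : ∃ n, k = i + n := ⟨k - i, by lia⟩
  rw [← dconv_comp_add_right]
  exact hp.dconv_mono f0 (fun j => hf (by lia)) (fun j => fb (j + n)) i

lemma backwardDiff_dconv (hp : IsDiscreteKernel p) (f0 : 0 ≤ f) (fb : ∀ i, f i ≤ b) :
    backwardDiff (dconv f p) = dconv (backwardDiff f) p := by
  funext i
  have shift : dconv f p (i - 1) = dconv (fun j => f (j - 1)) p i :=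
    (dconv_comp_add_right f p (-1) i).symm
  rw [backwardDiff, shift]
  unfold dconv
  rw [← (hp.summable_mul f0 fb i).tsum_sub
    (hp.summable_mul (fun j => f0 (j - 1)) (fun j => fb (j - 1)) i)]
  simp only [backwardDiff, mul_sub]

lemma dconv_le_mul_tsum (hp : IsDiscreteKernel p) (hC : ∀ n, p n ≤ C) (f0 : 0 ≤ f)
    (hf : Summable f) (i : ℤ) : dconv f p i ≤ C * ∑' j, f j := by
  have term_le (j : ℤ) : p (i - j) * f j ≤ C * f j := mul_le_mul_of_nonneg_right (hC _) (f0 j)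
  rw [← tsum_mul_left]
  exact (Summable.of_nonneg_of_le (fun j => mul_nonneg (hp.nonneg _) (f0 j)) term_le
    (hf.mul_left C)).tsum_le_tsum term_le (hf.mul_left C)

lemma tsum_mul_dconv_comm (hp : IsDiscreteKernel p) (f0 : 0 ≤ f) (fb : ∀ i, f i ≤ b)
    (g0 : 0 ≤ g) (hg : Summable g) :
    ∑' i, g i * dconv f p i = ∑' i, f i * dconv g p i := by
  have summable_kernel : Summable fun q : ℤ × ℤ => g q.1 * p (q.1 - q.2) :=
    ((Equiv.refl ℤ).prodShear Equiv.subLeft).summable_iff.2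
      (hg.mul_of_nonneg hp.hasSum_one.summable g0 hp.nonneg)
  have summable_terms : Summable fun q : ℤ × ℤ => g q.1 * p (q.1 - q.2) * f q.2 :=
    summable_mul_of_nonneg_of_le summable_kernel (fun q => mul_nonneg (g0 _) (hp.nonneg _))
      (fun q => f0 q.2) fun q => fb q.2
  calc ∑' i, g i * dconv f p i
      = ∑' i, ∑' j, g i * p (i - j) * f j := by simp only [dconv, ← tsum_mul_left, mul_assoc]
    _ = ∑' j, ∑' i, g i * p (i - j) * f j := summable_terms.prod_symm.tsum_comm
    _ = ∑' j, f j * dconv g p j := by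
        simp only [dconv, ← tsum_mul_left]
        refine tsum_congr fun j => tsum_congr fun i => ?_
        rw [← hp.even (j - i), neg_sub]
        ring

lemma backwardDiff_dconv_le (hp : IsDiscreteKernel p) (hC : ∀ n, p n ≤ C) (hf : Monotone f)
    (f0 : 0 ≤ f) (fb : ∀ i, f i ≤ b) (i : ℤ) : backwardDiff (dconv f p) i ≤ C * b := by
  have f_mem (j : ℤ) : f j ∈ Icc 0 b := ⟨f0 j, fb j⟩
  have C0 : 0 ≤ C := (hp.nonneg 0).trans (hC 0)
  calc backwardDiff (dconv f p) i
      = dconv (backwardDiff f) p i := by rw [hp.backwardDiff_dconv f0 fb]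
    _ ≤ C * ∑' j, backwardDiff f j :=
        hp.dconv_le_mul_tsum hC (backwardDiff_nonneg hf) (summable_backwardDiff hf f_mem) i
    _ ≤ C * (b - 0) := mul_le_mul_of_nonneg_left (tsum_backwardDiff_le hf f_mem) C0
    _ = C * b := by rw [sub_zero]

lemma tsum_backwardDiff_mul_dconv_add_le (hp : IsDiscreteKernel p) (hC : ∀ n, p n ≤ C)
    (hf : Monotone f) (f0 : 0 ≤ f) (fa : ∀ i, f i ≤ a)
    (hg : Monotone g) (g0 : 0 ≤ g) (gb : ∀ i, g i ≤ b) :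
    ∑' i, backwardDiff f i * dconv g p i + ∑' i, backwardDiff g i * dconv f p i ≤
      a * b + C * b * a := by
  have adjoint : ∑' i, backwardDiff g i * dconv f p i =
      ∑' i, f i * backwardDiff (dconv g p) i := by
    rw [hp.backwardDiff_dconv g0 gb]
    exact hp.tsum_mul_dconv_comm f0 fa (backwardDiff_nonneg hg)
      (summable_backwardDiff hg fun i => ⟨g0 i, gb i⟩)
  rw [adjoint]
  exact tsum_backwardDiff_mul_add_le hf f0 fa (hp.monotone_dconv g0 gb hg) (hp.dconv_nonneg g0)
    (hp.dconv_le g0 gb) (hp.backwardDiff_dconv_le hC hg g0 gb)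

lemma continuousOn_dconv (hp : IsDiscreteKernel p) :
    ContinuousOn (fun f => dconv f p) (Icc 0 1) := by
  refine continuousOn_pi.2 fun i => continuousOn_tsum (u := fun j => p (i - j))
    (fun j => (continuous_const.mul (continuous_apply j)).continuousOn)
    (hp.hasSum_sub i).summable fun j f hf => ?_
  rw [Real.norm_of_nonneg (mul_nonneg (hp.nonneg _) (hf.1 j))]
  exact mul_le_of_le_one_right (hp.nonneg _) (hf.2 j)

lemma tendsto_dconv (hp : IsDiscreteKernel p) {ι : Type*} {l : Filter ι} {φ : ι → ℤ → ℝ}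
    (hφ : ∀ t, φ t ∈ Icc 0 1) (hf : f ∈ Icc 0 1) (hlim : Tendsto φ l (𝓝 f)) (i : ℤ) :
    Tendsto (fun t => dconv (φ t) p i) l (𝓝 (dconv f p i)) :=
  tendsto_pi_nhds.1 ((hp.continuousOn_dconv f hf).tendsto.comp
    (tendsto_nhdsWithin_iff.2 ⟨hlim, .of_forall hφ⟩)) i

lemma tendsto_dconv_of_tendsto (hp : IsDiscreteKernel p) {l : Filter ℤ}
    (hl : ∀ n, Tendsto (fun i => n + i) l l) (hf : f ∈ Icc 0 1) (hb : b ∈ Icc (0 : ℝ) 1)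
    (hlim : Tendsto f l (𝓝 b)) : Tendsto (dconv f p) l (𝓝 b) := by
  have shifts_tendsto : Tendsto (fun n i => f (i + n)) l (𝓝 fun _ => b) :=
    tendsto_pi_nhds.2 fun i => hlim.comp (hl i)
  have at_zero := hp.tendsto_dconv (fun n => ⟨fun i => hf.1 (i + n), fun i => hf.2 (i + n)⟩)
    ⟨fun _ => hb.1, fun _ => hb.2⟩ shifts_tendsto 0
  simpa only [dconv_comp_add_right, zero_add, hp.dconv_const] using at_zero

end IsDiscreteKernel

end Convolution

section Recursion

/-- One half-iteration of the spatially coupled recursion: average over space, then apply `h`. -/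
def couplingStep (h : ℝ → ℝ) (p f : ℤ → ℝ) (i : ℤ) : ℝ := h (dconv f p i)

/-- One full iteration `f^t ↦ f^{t+1}` of the recursion, terminated on the left of the origin. -/
def terminatedStep (hf hg : ℝ → ℝ) (p f : ℤ → ℝ) : ℤ → ℝ :=
  (Ici 0).indicator (couplingStep hf p (couplingStep hg p f))

variable {h hf hg : ℝ → ℝ} {p f : ℤ → ℝ}

namespace IsDiscreteKernel

lemma dconv_mem_Icc (hp : IsDiscreteKernel p) (f_mem : f ∈ Icc 0 1) (i : ℤ) :
    dconv f p i ∈ Icc (0 : ℝ) 1 :=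
  ⟨hp.dconv_nonneg f_mem.1 i, hp.dconv_le f_mem.1 f_mem.2 i⟩

lemma mapsTo_couplingStep (hp : IsDiscreteKernel p) (hh : MemX h) :
    MapsTo (couplingStep h p) (Icc 0 1) (Icc 0 1) := fun _ f_mem =>
  ⟨fun i => (hh.2 (hp.dconv_mem_Icc f_mem i)).1, fun i => (hh.2 (hp.dconv_mem_Icc f_mem i)).2⟩

lemma monotoneOn_couplingStep (hp : IsDiscreteKernel p) (hh : MemX h) :
    MonotoneOn (couplingStep h p) (Icc 0 1) := fun _ f_mem _ g_mem hfg i =>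
  hh.1 (hp.dconv_mem_Icc f_mem i) (hp.dconv_mem_Icc g_mem i)
    (hp.dconv_mono f_mem.1 hfg g_mem.2 i)

lemma monotone_couplingStep (hp : IsDiscreteKernel p) (hh : MemX h) (f_mem : f ∈ Icc 0 1)
    (f_mono : Monotone f) : Monotone (couplingStep h p f) := fun i j hij =>
  hh.1 (hp.dconv_mem_Icc f_mem i) (hp.dconv_mem_Icc f_mem j)
    (hp.monotone_dconv f_mem.1 f_mem.2 f_mono hij)

lemma mapsTo_terminatedStep (hp : IsDiscreteKernel p) (hhf : MemX hf) (hhg : MemX hg) :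
    MapsTo (terminatedStep hf hg p) (Icc 0 1) (Icc 0 1) := fun f f_mem => by
  have step_mem := hp.mapsTo_couplingStep hhf (hp.mapsTo_couplingStep hhg f_mem)
  exact ⟨indicator_nonneg fun i _ => step_mem.1 i,
    indicator_le_self' (fun i _ => step_mem.1 i) |>.trans step_mem.2⟩

lemma monotoneOn_terminatedStep (hp : IsDiscreteKernel p) (hhf : MemX hf) (hhg : MemX hg) :
    MonotoneOn (terminatedStep hf hg p) (Icc 0 1) := fun _ f_mem _ g_mem hfg i =>
  indicator_le_indicator ((hp.monotoneOn_couplingStep hhf).comp (hp.monotoneOn_couplingStep hhg)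
    (hp.mapsTo_couplingStep hhg) f_mem g_mem hfg i)

lemma monotone_terminatedStep (hp : IsDiscreteKernel p) (hhf : MemX hf) (hhg : MemX hg)
    (f_mem : f ∈ Icc 0 1) (f_mono : Monotone f) : Monotone (terminatedStep hf hg p f) := by
  have g_mem := hp.mapsTo_couplingStep hhg f_mem
  exact monotone_indicator_Ici
    (hp.monotone_couplingStep hhf g_mem (hp.monotone_couplingStep hhg f_mem f_mono))
    (hp.mapsTo_couplingStep hhf g_mem).1 0

lemma iterate_terminatedStep_one_mem (hp : IsDiscreteKernel p) (hhf : MemX hf) (hhg : MemX hg)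
    (t : ℕ) : (terminatedStep hf hg p)^[t] 1 ∈ Icc (0 : ℤ → ℝ) 1 :=
  (hp.mapsTo_terminatedStep hhf hhg).iterate t (right_mem_Icc.2 zero_le_one)

lemma monotone_iterate_terminatedStep_one (hp : IsDiscreteKernel p) (hhf : MemX hf)
    (hhg : MemX hg) (t : ℕ) : Monotone ((terminatedStep hf hg p)^[t] 1) := by
  induction t with
  | zero => exact monotone_const
  | succ t ih =>
    rw [Function.iterate_succ_apply']
    exact hp.monotone_terminatedStep hhf hhg (hp.iterate_terminatedStep_one_mem hhf hhg t) ih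

lemma antitone_iterate_terminatedStep_one (hp : IsDiscreteKernel p) (hhf : MemX hf)
    (hhg : MemX hg) : Antitone fun t => (terminatedStep hf hg p)^[t] (1 : ℤ → ℝ) :=
  antitone_iterate_right_endpoint (hp.monotoneOn_terminatedStep hhf hhg)
    (hp.mapsTo_terminatedStep hhf hhg) zero_le_one

end IsDiscreteKernel

end Recursion

section StationaryPair

/-- Nondecreasing profiles `F`, `G` that are stationary for the terminated recursion, up to the
values of `hf` and `hg` at their jumps. Limits in time of the recursion are of this form, but need
not be stationary in the strict sense, because `hf` and `hg` may be discontinuous. -/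
structure IsStationaryPair (hf hg : ℝ → ℝ) (p F G : ℤ → ℝ) : Prop where
  left_mem : F ∈ Icc 0 1
  right_mem : G ∈ Icc 0 1
  left_mono : Monotone F
  right_mono : Monotone G
  left_eq_zero : ∀ i < 0, F i = 0
  left_graph : ∀ i, 0 ≤ i → (dconv G p i, F i) ∈ completedGraph hf
  right_graph : ∀ i, (dconv F p i, G i) ∈ completedGraph hg

variable {hf hg : ℝ → ℝ} {p F G : ℤ → ℝ} {C u v : ℝ}

namespace IsDiscreteKernel

lemma isStationaryPair_of_tendsto (hp : IsDiscreteKernel p) (hhf : MemX hf) (hhg : MemX hg)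
    {f : ℕ → ℤ → ℝ} (f_mem : ∀ t, f t ∈ Icc 0 1) (f_mono : ∀ t, Monotone (f t))
    (f_succ : ∀ t, f (t + 1) = terminatedStep hf hg p (f t)) (hF : Tendsto f atTop (𝓝 F))
    (hG : Tendsto (fun t => couplingStep hg p (f t)) atTop (𝓝 G)) :
    IsStationaryPair hf hg p F G := by
  have g_mem (t : ℕ) : couplingStep hg p (f t) ∈ Icc 0 1 := hp.mapsTo_couplingStep hhg (f_mem t)
  have F_mem : F ∈ Icc 0 1 := isClosed_Icc.mem_of_tendsto hF (.of_forall f_mem)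
  have G_mem : G ∈ Icc 0 1 := isClosed_Icc.mem_of_tendsto hG (.of_forall g_mem)
  have hF_succ (i : ℤ) : Tendsto (fun t => f (t + 1) i) atTop (𝓝 (F i)) :=
    tendsto_pi_nhds.1 ((tendsto_add_atTop_iff_nat 1).2 hF) i
  refine ⟨F_mem, G_mem, isClosed_monotone.mem_of_tendsto hF (.of_forall f_mono),
    isClosed_monotone.mem_of_tendsto hG (.of_forall fun t =>
      hp.monotone_couplingStep hhg (f_mem t) (f_mono t)), fun i hi => ?_, fun i hi => ?_,
    fun i => ?_⟩
  · refine tendsto_nhds_unique (hF_succ i) (tendsto_const_nhds.congr fun t => ?_)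
    rw [f_succ, terminatedStep, indicator_of_notMem (notMem_Ici.2 hi)]
  · refine (isClosed_completedGraph hf).mem_of_tendsto
      ((hp.tendsto_dconv g_mem G_mem hG i).prodMk_nhds (hF_succ i)) (.of_forall fun t => ?_)
    rw [f_succ, terminatedStep, indicator_of_mem (mem_Ici.2 hi)]
    exact hhf.mk_mem_completedGraph (hp.dconv_mem_Icc (g_mem t) i)
  · exact (isClosed_completedGraph hg).mem_of_tendsto
      ((hp.tendsto_dconv f_mem F_mem hF i).prodMk_nhds (tendsto_pi_nhds.1 hG i))
      (.of_forall fun t => hhg.mk_mem_completedGraph (hp.dconv_mem_Icc (f_mem t) i))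

lemma exists_isStationaryPair_tendsto (hp : IsDiscreteKernel p) (hhf : MemX hf)
    (hhg : MemX hg) : ∃ F G, IsStationaryPair hf hg p F G ∧
      Tendsto (fun t => (terminatedStep hf hg p)^[t] 1) atTop (𝓝 F) := by
  have f_mem := hp.iterate_terminatedStep_one_mem hhf hhg
  have f_anti := hp.antitone_iterate_terminatedStep_one hhf hhg
  have g_anti : Antitone fun t => couplingStep hg p ((terminatedStep hf hg p)^[t] 1) :=
    fun s t hst => hp.monotoneOn_couplingStep hhg (f_mem t) (f_mem s) (f_anti hst)
  have hF := tendsto_atTop_ciInf f_anti ⟨0, forall_mem_range.2 fun t => (f_mem t).1⟩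
  have hG := tendsto_atTop_ciInf g_anti
    ⟨0, forall_mem_range.2 fun t => (hp.mapsTo_couplingStep hhg (f_mem t)).1⟩
  exact ⟨_, _, hp.isStationaryPair_of_tendsto hhf hhg f_mem
    (hp.monotone_iterate_terminatedStep_one hhf hhg)
    (fun _ => Function.iterate_succ_apply' _ _ _) hF hG, hF⟩

end IsDiscreteKernel

namespace IsStationaryPair

lemma isCrossing_of_tendsto (hFG : IsStationaryPair hf hg p F G) (hp : IsDiscreteKernel p)
    (hF : Tendsto F atTop (𝓝 v)) (hG : Tendsto G atTop (𝓝 u)) : IsCrossing hf hg u v := by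
  have v_mem : v ∈ Icc (0 : ℝ) 1 := isClosed_Icc.mem_of_tendsto hF
    (.of_forall fun i => ⟨hFG.left_mem.1 i, hFG.left_mem.2 i⟩)
  have u_mem : u ∈ Icc (0 : ℝ) 1 := isClosed_Icc.mem_of_tendsto hG
    (.of_forall fun i => ⟨hFG.right_mem.1 i, hFG.right_mem.2 i⟩)
  have shift (n : ℤ) : Tendsto (fun i => n + i) atTop atTop :=
    tendsto_atTop_add_const_left _ n tendsto_id
  refine isCrossing_of_mem_completedGraph ?_ ?_
  · exact (isClosed_completedGraph hg).mem_of_tendsto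
      ((hp.tendsto_dconv_of_tendsto shift hFG.left_mem v_mem hF).prodMk_nhds hG)
      (.of_forall hFG.right_graph)
  · exact (isClosed_completedGraph hf).mem_of_tendsto
      ((hp.tendsto_dconv_of_tendsto shift hFG.right_mem u_mem hG).prodMk_nhds hF)
      ((eventually_ge_atTop 0).mono hFG.left_graph)

lemma integral_Xinv_left_le (hFG : IsStationaryPair hf hg p F G) (hp : IsDiscreteKernel p)
    (hhf : MemX hf) (hF : Tendsto F atTop (𝓝 v)) :
    ∫ z in (0 : ℝ)..v, Xinv hf z ≤ ∑' i, backwardDiff F i * dconv G p i := by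
  have G0 : 0 ≤ dconv G p := hp.dconv_nonneg hFG.right_mem.1
  refine intervalIntegral_le_tsum (monotone_Xinv hf) hFG.left_mono hFG.left_mem.1 G0
    (fun i => ?_) ?_ hF ?_
  · rcases lt_or_ge i 0 with hi | hi
    · rw [hFG.left_eq_zero i hi, Xinv_zero (hhf.2 ⟨le_rfl, zero_le_one⟩).1]
      exact G0 i
    · exact Xinv_le_of_mem_completedGraph (hFG.left_graph i hi)
  · refine tendsto_const_nhds.congr' ((eventually_lt_atBot 0).mono fun i hi => ?_)
    simp only [hFG.left_eq_zero i hi, zero_mul]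
  · exact summable_mul_of_nonneg_of_le (summable_backwardDiff hFG.left_mono fun i =>
      ⟨hFG.left_mem.1 i, hFG.left_mem.2 i⟩) (backwardDiff_nonneg hFG.left_mono) G0
      (hp.dconv_le hFG.right_mem.1 hFG.right_mem.2)

lemma integral_Xinv_right_le (hFG : IsStationaryPair hf hg p F G) (hp : IsDiscreteKernel p)
    (hG : Tendsto G atTop (𝓝 u)) :
    ∫ z in (0 : ℝ)..u, Xinv hg z ≤ ∑' i, backwardDiff G i * dconv F p i := by
  have F0 : 0 ≤ dconv F p := hp.dconv_nonneg hFG.left_mem.1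
  have F_tendsto : Tendsto F atBot (𝓝 0) :=
    tendsto_const_nhds.congr' ((eventually_lt_atBot 0).mono fun i hi =>
      (hFG.left_eq_zero i hi).symm)
  have dconv_tendsto : Tendsto (dconv F p) atBot (𝓝 0) := hp.tendsto_dconv_of_tendsto
    (fun n => tendsto_atBot_add_const_left _ n tendsto_id) hFG.left_mem ⟨le_rfl, zero_le_one⟩
    F_tendsto
  refine intervalIntegral_le_tsum (monotone_Xinv hg) hFG.right_mono hFG.right_mem.1 F0
    (fun i => Xinv_le_of_mem_completedGraph (hFG.right_graph i)) ?_ hG ?_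
  · exact squeeze_zero (fun i => mul_nonneg (hFG.right_mem.1 i) (F0 i))
      (fun i => mul_le_of_le_one_left (F0 i) (hFG.right_mem.2 i)) dconv_tendsto
  · exact summable_mul_of_nonneg_of_le (summable_backwardDiff hFG.right_mono fun i =>
      ⟨hFG.right_mem.1 i, hFG.right_mem.2 i⟩) (backwardDiff_nonneg hFG.right_mono) F0
      (hp.dconv_le hFG.left_mem.1 hFG.left_mem.2)

lemma pot_le (hFG : IsStationaryPair hf hg p F G) (hp : IsDiscreteKernel p)
    (hC : ∀ n, p n ≤ C) (hhf : MemX hf) (hF : Tendsto F atTop (𝓝 v))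
    (hG : Tendsto G atTop (𝓝 u)) : Pot hf hg u v ≤ C * u * v := by
  have sums_le := hp.tsum_backwardDiff_mul_dconv_add_le hC
    hFG.left_mono hFG.left_mem.1 (hFG.left_mono.ge_of_tendsto hF)
    hFG.right_mono hFG.right_mem.1 (hFG.right_mono.ge_of_tendsto hG)
  unfold Pot
  linarith [hFG.integral_Xinv_left_le hp hhf hF, hFG.integral_Xinv_right_le hp hG]

lemma left_eq_zero_of_forall_lt_pot (hFG : IsStationaryPair hf hg p F G)
    (hp : IsDiscreteKernel p) (hC : ∀ n, p n ≤ C) (hhf : MemX hf)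
    (hgap : ∀ u v, IsCrossing hf hg u v → v ≠ 0 → C * u * v < Pot hf hg u v) : F = 0 := by
  have hF : Tendsto F atTop (𝓝 (⨆ i, F i)) :=
    tendsto_atTop_ciSup hFG.left_mono ⟨1, forall_mem_range.2 hFG.left_mem.2⟩
  have hG : Tendsto G atTop (𝓝 (⨆ i, G i)) :=
    tendsto_atTop_ciSup hFG.right_mono ⟨1, forall_mem_range.2 hFG.right_mem.2⟩
  have sup_eq_zero : ⨆ i, F i = 0 := by
    by_contra hne
    exact (hgap _ _ (hFG.isCrossing_of_tendsto hp hF hG) hne).not_ge (hFG.pot_le hp hC hhf hF hG)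
  rw [sup_eq_zero] at hF
  exact le_antisymm (hFG.left_mono.ge_of_tendsto hF) hFG.left_mem.1

end IsStationaryPair

end StationaryPair

lemma StrictPosGap.mul_lt_pot {hf hg : ℝ → ℝ} {C u v : ℝ} (hgap : StrictPosGap hf hg)
    (C0 : 0 ≤ C) (hA : C < Agap hf hg) (huv : IsCrossing hf hg u v) (hv : v ≠ 0) :
    C * u * v < Pot hf hg u v := by
  have le_C : C * u * v ≤ C := by
    rw [mul_assoc]
    exact mul_le_of_le_one_right C0 (mul_le_one₀ huv.1.2 huv.2.1.1 huv.2.1.2)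
  by_cases h_one : u = 1 ∧ v = 1
  · obtain ⟨rfl, rfl⟩ := h_one
    exact le_C.trans_lt hA
  · exact (le_C.trans hA.le).trans_lt ((le_max_right _ _).trans_lt
      (hgap.2 u v huv (fun h_zero => hv h_zero.2) h_one))

lemma intCast_mul_neg_iff {Δ : ℝ} (hΔ : 0 < Δ) (i : ℤ) : (i : ℝ) * Δ < 0 ↔ i < 0 := by
  rw [← Int.cast_lt_zero (R := ℝ)]
  exact ⟨fun h => neg_of_mul_neg_left h hΔ.le, fun h => mul_neg_of_neg_of_pos h hΔ⟩

theorem discrete_terminated_convergence_general {p : ℤ → ℝ} {hf hg : ℝ → ℝ} {C : ℝ}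
    (hp : IsDiscreteKernel p) (hC : ∀ n, p n ≤ C) (hhf : MemX hf) (hhg : MemX hg)
    (hgap : ∀ u v, IsCrossing hf hg u v → v ≠ 0 → C * u * v < Pot hf hg u v)
    {f g : ℕ → ℤ → ℝ} (hrange : ∀ i, f 0 i ∈ Icc (0 : ℝ) 1)
    (hrecg : ∀ t i, g t i = hg (dconv (f t) p i))
    (hrecf : ∀ t (i : ℤ), f (t + 1) i = if i < 0 then 0 else hf (dconv (g t) p i)) (i : ℤ) :
    Tendsto (fun t => f t i) atTop (𝓝 0) := by
  set T := terminatedStep hf hg p with T_def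
  have f_succ (t : ℕ) : f (t + 1) = T (f t) := by
    have g_eq : g t = couplingStep hg p (f t) := funext (hrecg t)
    funext i
    rw [hrecf, T_def, terminatedStep, ← g_eq, indicator_apply]
    simp only [mem_Ici, ← not_lt, ite_not, couplingStep]
  have f_eq (t : ℕ) : f t = T^[t] (f 0) := by
    induction t with
    | zero => rfl
    | succ t ih => rw [f_succ, ih, Function.iterate_succ_apply']
  have T_maps : MapsTo T (Icc 0 1) (Icc 0 1) := hp.mapsTo_terminatedStep hhf hhg
  have f0_mem : f 0 ∈ Icc 0 1 := ⟨fun i => (hrange i).1, fun i => (hrange i).2⟩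
  have f_le (t : ℕ) : f t ≤ T^[t] 1 := f_eq t ▸
    monotoneOn_iterate (hp.monotoneOn_terminatedStep hhf hhg) T_maps t f0_mem
      (right_mem_Icc.2 zero_le_one) f0_mem.2
  obtain ⟨F, G, hFG, hF⟩ := hp.exists_isStationaryPair_tendsto hhf hhg
  rw [hFG.left_eq_zero_of_forall_lt_pot hp hC hhf hgap] at hF
  exact squeeze_zero (fun t => f_eq t ▸ (T_maps.iterate t f0_mem).1 i) (fun t => f_le t i)
    (tendsto_pi_nhds.1 hF i)

/-- **Discrete terminated convergence.** -/
theorem discrete_terminated_convergence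
    (ω hf hg : ℝ → ℝ) (Δ : ℝ) (hΔ : 0 < Δ)
    (hω : IsAveragingKernel ω) (hreg : IsRegularKernel ω)
    (hhf : MemX hf) (hhg : MemX hg)
    (hgap : StrictPosGap hf hg)
    (hA : Δ * kerSup ω < Agap hf hg)
    (f g : ℕ → ℤ → ℝ)
    (hrange : ∀ i, f 0 i ∈ Icc (0:ℝ) 1)
    (hrecg : ∀ t i, g t i = hg (dconv (f t) (dker ω Δ) i))
    (hrecf : ∀ t (i : ℤ), f (t + 1) i =
      if (i : ℝ) * Δ < 0 then 0 else hf (dconv (g t) (dker ω Δ) i)) :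
    ∀ i : ℤ, Filter.Tendsto (fun t => f t i) Filter.atTop (nhds 0) :=
  discrete_terminated_convergence_general (hω.isDiscreteKernel_dker hΔ)
    (hω.dker_le_mul_kerSup hΔ.le) hhf hhg
    (fun _ _ => hgap.mul_lt_pot (mul_nonneg hΔ.le ENNReal.toReal_nonneg) hA) hrange hrecg
    (by simpa only [intCast_mul_neg_iff hΔ] using hrecf)
end
end

section
/- Spatial fixed point integration identity. Let f, g ∈ Ψ (not necessarily interpolating) and let ω be an even averaging kernel. Let h_g be any nondecreasing function on [(f⊗ω)(−∞), (f⊗ω)(+∞)] such that g(x) ∈ [h_g((f⊗ω)(x)−), h_g((f⊗ω)(x)+)] for all x ∈ ℝ, and let h_f be any nondecreasing function on [(g⊗ω)(−∞), (g⊗ω)(+∞)] such that f(x) ∈ [h_f((g⊗ω)(x)−), h_f((g⊗ω)(x)+)] for all x ∈ ℝ (such functions exist and are unique up to sets of measure zero). Then for all x₁, x₂ ∈ ℝ: ∫_{g(−∞)}^{g(x₁+)} h_g⁻¹(u) du + ∫_{f(−∞)}^{f(x₂+)} h_f⁻¹(v) dv − f(x₂+)·g(x₁+) + f(−∞)·g(−∞)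 = Ξ(ω; f, g; x₁, x₂). -/
open MeasureTheory Filter Set

noncomputable section

/-- Right limit `f(x+)` of a nondecreasing bounded function. -/
def rlim (f : ℝ → ℝ) (x : ℝ) : ℝ := sInf (f '' Ioi x)

/-- Left limit `f(x−)` of a nondecreasing bounded function. -/
def llim (f : ℝ → ℝ) (x : ℝ) : ℝ := sSup (f '' Iio x)

/-- `f(−∞)`, the limit at `−∞` of a nondecreasing bounded function. -/
def limBot (f : ℝ → ℝ) : ℝ := sInf (Set.range f)

/-- `f(+∞)`, the limit at `+∞` of a nondecreasing bounded function. -/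
def limTop (f : ℝ → ℝ) : ℝ := sSup (Set.range f)

/-- The Lebesgue–Stieltjes measure associated with a (monotone) function. -/
def stieltjesOf (f : ℝ → ℝ) : Measure ℝ :=
  haveI := Classical.dec (Monotone f)
  if h : Monotone f then h.stieltjesFunction.measure else 0

/-- Oriented Lebesgue–Stieltjes integral `∫_{(a,b]} φ df`, with the convention
`∫_{(a,b]} = −∫_{(b,a]}` when `b < a`. -/
def sInteg (f : ℝ → ℝ) (φ : ℝ → ℝ) (a b : ℝ) : ℝ :=
  if a ≤ b then ∫ y in Ioc a b, φ y ∂(stieltjesOf f)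
  else - ∫ y in Ioc b a, φ y ∂(stieltjesOf f)

/-- `Ξ(ω; f, g; x₁, x₂)`. -/
def Xi (ω f g : ℝ → ℝ) (x₁ x₂ : ℝ) : ℝ :=
  (∫ x in Ioi (0:ℝ), ω x * sInteg f (fun y => rlim g x₁ - g (y - x)) x₂ (x₁ + x)) +
    (∫ x in Ioi (0:ℝ), ω x * sInteg g (fun y => rlim f x₂ - f (y - x)) x₁ (x₂ + x))

/-- Generalized inverse of a monotone function on `ℝ`. -/
def ginv (h : ℝ → ℝ) (v : ℝ) : ℝ := sInf {u | v ≤ h u}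

/-!
Since `g(x)` lies in the jump interval of `h_g` at `(f ⊗ ω)(x)`, the inverse of `h_g` is
`(f ⊗ ω) ∘ g⁻¹`, and the quantile transform `g⁻¹` pushes Lebesgue measure on `(g(−∞), g(x₁+)]`
forward to `dg` on `(−∞, x₁]`. So the integral of `h_g⁻¹` is
`∫_{y ≤ x₁} (f ⊗ ω) dg`, which by evenness of `ω` is the integral over `x > 0`, against `ω`, of
`∫_{y ≤ x₁} f(y − x) dg + ∫_{y ≤ x₁} f(y + x) dg`. Integrating `d(f(y + x) g(y))` by parts, valid
for almost every shift `x` because then `f(· + x)` and `g` have no common jump, turns the second of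
these, together with `∫_{y ≤ x₂} g(y − x) df`, into the first inner integral of `Ξ`; exchanging the
roles of `f` and `g` accounts for the other two terms and the second half of `Ξ`.
-/

open Bornology Function
open scoped Topology

variable {f g h c ω : ℝ → ℝ} {x t u : ℝ}

lemma rlim_eq_rightLim (hf : Monotone f) (x : ℝ) : rlim f x = rightLim f x :=
  hf.rightLim_eq_sInf.symm

lemma llim_eq_leftLim (hf : Monotone f) (x : ℝ) : llim f x = leftLim f x :=
  hf.leftLim_eq_sSup.symm

lemma le_rlim (hf : Monotone f) (x : ℝ) : f x ≤ rlim f x :=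
  (hf.le_rightLim le_rfl).trans_eq (rlim_eq_rightLim hf x).symm

lemma rlim_le (hf : Monotone f) {y : ℝ} (hxy : x < y) : rlim f x ≤ f y :=
  (rlim_eq_rightLim hf x).trans_le (hf.rightLim_le hxy)

lemma monotone_rlim (hf : Monotone f) : Monotone (rlim f) := by
  rw [funext (rlim_eq_rightLim hf)]
  exact hf.rightLim

lemma limBot_le (hfb : BddBelow (range f)) (x : ℝ) : limBot f ≤ f x :=
  csInf_le hfb (mem_range_self x)

lemma limBot_le_rlim (hf : Monotone f) (hfb : BddBelow (range f)) (x : ℝ) :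
    limBot f ≤ rlim f x :=
  (limBot_le hfb x).trans (le_rlim hf x)

/-! ### Stieltjes measures of monotone functions -/

lemma stieltjesOf_eq_measure (hf : Monotone f) : stieltjesOf f = hf.stieltjesFunction.measure :=
  dif_pos hf

lemma tendsto_stieltjesFunction_atBot (hf : Monotone f) (hfb : BddBelow (range f)) :
    Tendsto hf.stieltjesFunction atBot (𝓝 (limBot f)) :=
  tendsto_rightLim_atBot_of_tendsto (tendsto_atBot_ciInf hf hfb)

lemma tendsto_stieltjesFunction_atTop (hf : Monotone f) (hfb : BddAbove (range f)) :
    Tendsto hf.stieltjesFunction atTop (𝓝 (limTop f)) :=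
  tendsto_rightLim_atTop_of_tendsto (tendsto_atTop_ciSup hf hfb)

lemma isFiniteMeasure_stieltjesOf (hf : Monotone f) (hfb : IsBounded (range f)) :
    IsFiniteMeasure (stieltjesOf f) := by
  rw [stieltjesOf_eq_measure hf]
  exact hf.stieltjesFunction.isFiniteMeasure (tendsto_stieltjesFunction_atBot hf hfb.bddBelow)
    (tendsto_stieltjesFunction_atTop hf hfb.bddAbove)

lemma stieltjesOf_Iic (hf : Monotone f) (hfb : BddBelow (range f)) (x : ℝ) :
    stieltjesOf f (Iic x) = ENNReal.ofReal (rlim f x - limBot f) := by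
  rw [stieltjesOf_eq_measure hf,
    hf.stieltjesFunction.measure_Iic (tendsto_stieltjesFunction_atBot hf hfb),
    hf.stieltjesFunction_eq, rlim_eq_rightLim hf]

lemma stieltjesOf_real_Iic (hf : Monotone f) (hfb : BddBelow (range f)) (x : ℝ) :
    (stieltjesOf f).real (Iic x) = rlim f x - limBot f := by
  rw [Measure.real, stieltjesOf_Iic hf hfb,
    ENNReal.toReal_ofReal (sub_nonneg.2 (limBot_le_rlim hf hfb x))]

lemma stieltjesOf_real_Iic_of_continuousAt (hf : Monotone f) (hfb : BddBelow (range f))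
    (hx : ContinuousAt f x) : (stieltjesOf f).real (Iic x) = f x - limBot f := by
  rw [stieltjesOf_real_Iic hf hfb, rlim_eq_rightLim hf, hx.continuousWithinAt.rightLim_eq]

lemma stieltjesOf_real_Iio_of_continuousAt (hf : Monotone f) (hfb : BddBelow (range f))
    (hx : ContinuousAt f x) : (stieltjesOf f).real (Iio x) = f x - limBot f := by
  have leftLim_eq : leftLim hf.stieltjesFunction x = f x :=
    (leftLim_rightLim (hf.tendsto_leftLim x)).trans hx.continuousWithinAt.leftLim_eq
  rw [Measure.real, stieltjesOf_eq_measure hf,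
    hf.stieltjesFunction.measure_Iio (tendsto_stieltjesFunction_atBot hf hfb), leftLim_eq,
    ENNReal.toReal_ofReal (sub_nonneg.2 (limBot_le hfb x))]

lemma sInteg_eq_sub {φ : ℝ → ℝ} (hφ : Integrable φ (stieltjesOf f)) (a b : ℝ) :
    sInteg f φ a b =
      (∫ y in Iic b, φ y ∂(stieltjesOf f)) - ∫ y in Iic a, φ y ∂(stieltjesOf f) := by
  rw [intervalIntegral.integral_Iic_sub_Iic hφ.integrableOn hφ.integrableOn, sInteg]
  split_ifs with hab
  · rw [intervalIntegral.integral_of_le hab]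
  · rw [intervalIntegral.integral_of_ge (le_of_not_ge hab)]

/-! ### Generalized inverses and the quantile transform -/

lemma bddBelow_setOf_le (hg : Monotone g) (hu : limBot g < u) : BddBelow {x | u ≤ g x} := by
  obtain ⟨_, ⟨y, rfl⟩, hyu⟩ := exists_lt_of_csInf_lt (range_nonempty g) hu
  exact ⟨y, fun x hx => (hg.reflect_lt (hyu.trans_le hx)).le⟩

lemma ginv_le_iff (hg : Monotone g) (hu : u ∈ Ioc (limBot g) (rlim g t)) :
    ginv g u ≤ x ↔ u ≤ rlim g x := by
  constructor
  · intro hux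
    refine le_csInf (nonempty_Ioi.image g) ?_
    rintro _ ⟨r, hr, rfl⟩
    have hne : {x | u ≤ g x}.Nonempty := ⟨t + 1, hu.2.trans (rlim_le hg (lt_add_one t))⟩
    obtain ⟨y, huy, hyr⟩ := exists_lt_of_csInf_lt hne (hux.trans_lt hr)
    exact huy.trans (hg hyr.le)
  · exact fun hux => le_of_forall_gt_imp_ge_of_dense fun r hr =>
      csInf_le (bddBelow_setOf_le hg hu.1) (hux.trans (rlim_le hg hr))

lemma monotoneOn_ginv (hg : Monotone g) (t : ℝ) :
    MonotoneOn (ginv g) (Ioc (limBot g) (rlim g t)) := fun _ hu _ hv huv =>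
  (ginv_le_iff hg hu).2 (huv.trans ((ginv_le_iff hg hv).1 le_rfl))

lemma aemeasurable_ginv (hg : Monotone g) (t : ℝ) :
    AEMeasurable (ginv g) (volume.restrict (Ioc (limBot g) (rlim g t))) :=
  aemeasurable_restrict_of_monotoneOn measurableSet_Ioc (monotoneOn_ginv hg t)

lemma map_ginv_restrict_volume (hg : Monotone g) (hgb : BddBelow (range g)) (t : ℝ) :
    (volume.restrict (Ioc (limBot g) (rlim g t))).map (ginv g) =
      (stieltjesOf g).restrict (Iic t) := by
  refine Measure.ext_of_Iic _ _ fun s => ?_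
  have preimage_Iic : ginv g ⁻¹' Iic s ∩ Ioc (limBot g) (rlim g t) =
      Ioc (limBot g) (min (rlim g s) (rlim g t)) := by
    ext u
    simp only [mem_inter_iff, mem_preimage, mem_Iic, mem_Ioc, le_min_iff]
    exact ⟨fun ⟨hus, hu⟩ => ⟨hu.1, (ginv_le_iff hg hu).1 hus, hu.2⟩,
      fun ⟨hlu, hus, hut⟩ => ⟨(ginv_le_iff hg ⟨hlu, hut⟩).2 hus, hlu, hut⟩⟩
  rw [Measure.map_apply_of_aemeasurable (aemeasurable_ginv hg t) measurableSet_Iic,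
    Measure.restrict_apply' measurableSet_Ioc, preimage_Iic, Real.volume_Ioc,
    Measure.restrict_apply measurableSet_Iic, Iic_inter_Iic, stieltjesOf_Iic hg hgb,
    (monotone_rlim hg).map_min]

lemma ginv_eq_comp_ginv (hg : Monotone g) (hh : Monotone h) (hc : Continuous c)
    (hgh : ∀ x, g x ∈ Icc (llim h (c x)) (rlim h (c x)))
    (hu : u ∈ Ioc (limBot g) (rlim g t)) : ginv h u = c (ginv g u) := by
  set q := ginv g u
  have le_of_gt : ∀ w, c q < w → u ≤ h w := by
    intro w hw
    have near : ∀ᶠ x in 𝓝[>] q, c x < w :=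
      (hc.tendsto q).mono_left nhdsWithin_le_nhds |>.eventually_lt_const hw
    obtain ⟨x, hxw, hqx⟩ := (near.and self_mem_nhdsWithin).exists
    calc u ≤ rlim g q := (ginv_le_iff hg hu).1 le_rfl
      _ ≤ g x := rlim_le hg hqx
      _ ≤ rlim h (c x) := (hgh x).2
      _ ≤ h w := rlim_le hh hxw
  have lt_of_lt : ∀ w, w < c q → h w < u := by
    intro w hw
    have near : ∀ᶠ x in 𝓝[<] q, w < c x :=
      (hc.tendsto q).mono_left nhdsWithin_le_nhds |>.eventually_const_lt hw
    obtain ⟨x, hwx, hxq⟩ := (near.and self_mem_nhdsWithin).exists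
    calc h w ≤ leftLim h (c x) := hh.le_leftLim hwx
      _ = llim h (c x) := (llim_eq_leftLim hh _).symm
      _ ≤ g x := (hgh x).1
      _ ≤ rlim g x := le_rlim hg x
      _ < u := not_le.1 fun hux => hxq.not_ge ((ginv_le_iff hg hu).2 hux)
  have mem_lowerBounds : c q ∈ lowerBounds {w | u ≤ h w} := fun w huw =>
    not_lt.1 fun hw => huw.not_gt (lt_of_lt w hw)
  exact le_antisymm
    (le_of_forall_gt_imp_ge_of_dense fun w hw => csInf_le ⟨_, mem_lowerBounds⟩ (le_of_gt w hw))
    (le_csInf ⟨c q + 1, le_of_gt _ (lt_add_one _)⟩ mem_lowerBounds)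

lemma integral_ginv_eq_setIntegral_stieltjesOf (hg : Monotone g) (hgb : BddBelow (range g))
    (hh : Monotone h) (hc : Continuous c)
    (hgh : ∀ x, g x ∈ Icc (llim h (c x)) (rlim h (c x))) (t : ℝ) :
    ∫ u in limBot g..rlim g t, ginv h u = ∫ y in Iic t, c y ∂(stieltjesOf g) := by
  rw [intervalIntegral.integral_of_le (limBot_le_rlim hg hgb t),
    ← map_ginv_restrict_volume hg hgb t,
    integral_map (aemeasurable_ginv hg t) hc.aestronglyMeasurable]
  exact setIntegral_congr_fun measurableSet_Ioc fun u hu => ginv_eq_comp_ginv hg hh hc hgh hu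

/-! ### Integrability and generic shifts -/

section Integrability

variable {α β : Type*} [MeasurableSpace α] [MeasurableSpace β] {μ : Measure α} {k : α → ℝ}
  {F : β → ℝ}

lemma integrable_mul_comp_of_isBounded (hk : Integrable k μ) (hF : Measurable F)
    (hFb : IsBounded (range F)) {φ : α → β} (hφ : Measurable φ) :
    Integrable (fun a => k a * F (φ a)) μ := by
  obtain ⟨C, hC⟩ := hFb.exists_norm_le
  exact hk.mul_bdd (hF.comp hφ).aestronglyMeasurable
    (ae_of_all _ fun a => hC _ (mem_range_self (φ a)))

lemma integrable_comp_of_isBounded [IsFiniteMeasure μ] (hF : Measurable F)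
    (hFb : IsBounded (range F)) {φ : α → β} (hφ : Measurable φ) :
    Integrable (fun a => F (φ a)) μ := by
  simpa only [one_mul] using
    integrable_mul_comp_of_isBounded (integrable_const (1 : ℝ)) hF hFb hφ

lemma integrable_mul_integral_comp_of_isBounded {γ : Type*} [MeasurableSpace γ] {ν : Measure γ}
    [IsFiniteMeasure ν] [SFinite μ] (hk : Integrable k μ) (hF : Measurable F)
    (hFb : IsBounded (range F)) {φ : α → γ → β} (hφ : Measurable (uncurry φ)) :
    Integrable (fun a => k a * ∫ y, F (φ a y) ∂ν) μ := by
  have joint := (integrable_mul_comp_of_isBounded (hk.comp_fst ν) hF hFb hφ).integral_prod_left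
  simpa only [uncurry_apply_pair, integral_const_mul] using joint

end Integrability

lemma ae_continuousAt_comp_of_injective (hf : Monotone f) {α : Type*} [MeasurableSpace α]
    (μ : Measure α) [NullSingletonClass μ] {φ : α → ℝ} (hφ : Injective φ) :
    ∀ᵐ z ∂μ, ContinuousAt f (φ z) := by
  filter_upwards [(hf.countable_not_continuousAt.preimage hφ).ae_notMem μ] with z hz
  exact not_not.1 hz

lemma ae_ae_continuousAt_comp_of_injective (hf : Monotone f) {α β : Type*} [MeasurableSpace α]
    [MeasurableSpace β] (μ : Measure α) [NullSingletonClass μ] [SFinite μ] (ν : Measure β)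
    [SFinite ν] {φ : α → β → ℝ} (hφ : Measurable (uncurry φ))
    (hinj : ∀ y, Injective fun x => φ x y) :
    ∀ᵐ x ∂μ, ∀ᵐ y ∂ν, ContinuousAt f (φ x y) := by
  have hmeas : MeasurableSet {p : α × β | ContinuousAt f (φ p.1 p.2)} :=
    hφ (measurableSet_of_continuousAt f)
  rw [Measure.ae_ae_comm hmeas]
  exact ae_of_all _ fun y => ae_continuousAt_comp_of_injective hf μ (hinj y)

/-! ### Integration by parts -/

lemma integral_measureReal_prodMk_add_compl {α β : Type*} [MeasurableSpace α] [MeasurableSpace β]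
    (μ : Measure α) (ν : Measure β) [IsFiniteMeasure μ] [IsFiniteMeasure ν] {s : Set (α × β)}
    (hs : MeasurableSet s) :
    ∫ y, ν.real (Prod.mk y ⁻¹' s) ∂μ + ∫ z, μ.real ((fun y => (y, z)) ⁻¹' sᶜ) ∂ν =
      μ.real univ * ν.real univ := by
  have left : ∫ y, ν.real (Prod.mk y ⁻¹' s) ∂μ = (μ.prod ν).real s := by
    rw [Measure.real, Measure.prod_apply hs]
    exact integral_toReal (measurable_measure_prodMk_left hs).aemeasurable
      (ae_of_all _ fun _ => measure_lt_top _ _)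
  have right : ∫ z, μ.real ((fun y => (y, z)) ⁻¹' sᶜ) ∂ν = (μ.prod ν).real sᶜ := by
    rw [Measure.real, Measure.prod_apply_symm hs.compl]
    exact integral_toReal (measurable_measure_prodMk_right hs.compl).aemeasurable
      (ae_of_all _ fun _ => measure_lt_top _ _)
  rw [left, right, measureReal_add_measureReal_compl hs, ← univ_prod_univ, measureReal_prod_prod]

lemma setIntegral_measureReal_Iic_add_setIntegral_measureReal_Iio (μ ν : Measure ℝ)
    [IsFiniteMeasure μ] [IsFiniteMeasure ν] (t x : ℝ) :
    ∫ y in Iic t, μ.real (Iic (y + x)) ∂ν + ∫ z in Iic (t + x), ν.real (Iio (z - x)) ∂μ =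
      ν.real (Iic t) * μ.real (Iic (t + x)) := by
  have hs : MeasurableSet {p : ℝ × ℝ | p.2 ≤ p.1 + x} :=
    measurableSet_le measurable_snd (measurable_fst.add_const x)
  have parts := integral_measureReal_prodMk_add_compl
    (ν.restrict (Iic t)) (μ.restrict (Iic (t + x))) hs
  rw [measureReal_restrict_apply_univ, measureReal_restrict_apply_univ] at parts
  rw [← parts]
  congr 1
  · refine setIntegral_congr_fun measurableSet_Iic fun y (hy : y ≤ t) => ?_
    have section_eq : Prod.mk y ⁻¹' {p : ℝ × ℝ | p.2 ≤ p.1 + x} = Iic (y + x) := rfl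
    rw [section_eq, measureReal_restrict_apply measurableSet_Iic, Iic_inter_Iic,
      min_eq_left (by gcongr)]
  · refine setIntegral_congr_fun measurableSet_Iic fun z (hz : z ≤ t + x) => ?_
    have section_eq : (fun y => (y, z)) ⁻¹' {p : ℝ × ℝ | p.2 ≤ p.1 + x}ᶜ = Iio (z - x) := by
      ext y
      simp [lt_sub_iff_add_lt]
    have subset : Iio (z - x) ⊆ Iic t := fun y (hy : y < z - x) => by
      rw [mem_Iic]
      linarith
    rw [section_eq, measureReal_restrict_apply measurableSet_Iio, inter_eq_left.2 subset]

lemma setIntegral_comp_add_add_setIntegral_comp_sub (hf : Monotone f) (hfb : IsBounded (range f))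
    (hg : Monotone g) (hgb : IsBounded (range g))
    (hfx : ∀ᵐ y ∂(stieltjesOf g), ContinuousAt f (y + x))
    (hgx : ∀ᵐ z ∂(stieltjesOf f), ContinuousAt g (z - x)) (t : ℝ) :
    ∫ y in Iic t, f (y + x) ∂(stieltjesOf g) + ∫ z in Iic (t + x), g (z - x) ∂(stieltjesOf f) =
      rlim f (t + x) * rlim g t - limBot f * limBot g := by
  have := isFiniteMeasure_stieltjesOf hf hfb
  have := isFiniteMeasure_stieltjesOf hg hgb
  have left : ∫ y in Iic t, (stieltjesOf f).real (Iic (y + x)) ∂(stieltjesOf g) =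
      ∫ y in Iic t, (f (y + x) - limBot f) ∂(stieltjesOf g) :=
    integral_congr_ae <| ae_restrict_of_ae <| hfx.mono fun y hy =>
      stieltjesOf_real_Iic_of_continuousAt hf hfb.bddBelow hy
  have right : ∫ z in Iic (t + x), (stieltjesOf g).real (Iio (z - x)) ∂(stieltjesOf f) =
      ∫ z in Iic (t + x), (g (z - x) - limBot g) ∂(stieltjesOf f) :=
    integral_congr_ae <| ae_restrict_of_ae <| hgx.mono fun z hz =>
      stieltjesOf_real_Iio_of_continuousAt hg hgb.bddBelow hz
  have parts := setIntegral_measureReal_Iic_add_setIntegral_measureReal_Iio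
    (stieltjesOf f) (stieltjesOf g) t x
  rw [left, right,
    integral_sub (integrable_comp_of_isBounded hf.measurable hfb (by fun_prop))
      (integrable_const _),
    integral_sub (integrable_comp_of_isBounded hg.measurable hgb (by fun_prop))
      (integrable_const _)] at parts
  simp only [setIntegral_const, smul_eq_mul, stieltjesOf_real_Iic hf hfb.bddBelow,
    stieltjesOf_real_Iic hg hgb.bddBelow] at parts
  linear_combination parts

lemma sInteg_rlim_sub_comp_sub (hf : Monotone f) (hfb : IsBounded (range f))
    (hg : Monotone g) (hgb : IsBounded (range g))
    (hfx : ∀ᵐ y ∂(stieltjesOf g), ContinuousAt f (y + x))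
    (hgx : ∀ᵐ z ∂(stieltjesOf f), ContinuousAt g (z - x)) (x₁ x₂ : ℝ) :
    sInteg f (fun y => rlim g x₁ - g (y - x)) x₂ (x₁ + x) =
      ∫ y in Iic x₁, f (y + x) ∂(stieltjesOf g) + ∫ y in Iic x₂, g (y - x) ∂(stieltjesOf f) -
        (rlim f x₂ * rlim g x₁ - limBot f * limBot g) := by
  have := isFiniteMeasure_stieltjesOf hf hfb
  have hgi : Integrable (fun y => g (y - x)) (stieltjesOf f) :=
    integrable_comp_of_isBounded hg.measurable hgb (by fun_prop)
  have hi : Integrable (fun y => rlim g x₁ - g (y - x)) (stieltjesOf f) :=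
    (integrable_const _).sub hgi
  have parts := setIntegral_comp_add_add_setIntegral_comp_sub hf hfb hg hgb hfx hgx x₁
  rw [sInteg_eq_sub hi,
    integral_sub (integrable_const _) hgi.integrableOn,
    integral_sub (integrable_const _) hgi.integrableOn]
  simp only [setIntegral_const, smul_eq_mul, stieltjesOf_real_Iic hf hfb.bddBelow]
  linear_combination -parts

/-! ### Convolution with an even kernel -/

lemma integral_eq_setIntegral_Ioi_comp_neg_add {φ : ℝ → ℝ} (hφ : Integrable φ) :
    ∫ x, φ x = (∫ x in Ioi 0, φ (-x)) + ∫ x in Ioi 0, φ x := by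
  rw [← intervalIntegral.integral_Iic_add_Ioi hφ.integrableOn hφ.integrableOn (b := 0),
    integral_comp_neg_Ioi, neg_zero]

lemma conv_eq_integral_mul_comp_sub (f ω : ℝ → ℝ) (x : ℝ) :
    conv f ω x = ∫ z, ω z * f (x - z) := by
  rw [← integral_sub_left_eq_self _ volume x]
  simp only [conv, sub_sub_cancel, mul_comm]

lemma continuous_conv (hf : Monotone f) (hfb : IsBounded (range f)) (hω : Integrable ω) :
    Continuous (conv f ω) := by
  obtain ⟨C, hC⟩ := hfb.exists_norm_le
  rw [funext (conv_eq_integral_mul_comp_sub f ω)]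
  refine continuous_iff_continuousAt.2 fun x =>
    continuousAt_of_dominated (bound := fun z => ‖ω z‖ * C) (.of_forall fun x => ?_)
      (.of_forall fun x => ae_of_all _ fun z => ?_) (hω.norm.mul_const C) ?_
  · exact (integrable_mul_comp_of_isBounded hω hf.measurable hfb (by fun_prop)).1
  · rw [norm_mul]
    gcongr
    exact hC _ (mem_range_self _)
  · filter_upwards [ae_continuousAt_comp_of_injective hf volume (sub_right_injective (b := x))]
      with z hz
    exact continuousAt_const.mul (ContinuousAt.comp (f := (· - z)) hz (by fun_prop))

lemma integral_conv (hf : Measurable f) (hfb : IsBounded (range f)) (hω : Integrable ω)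
    (μ : Measure ℝ) [IsFiniteMeasure μ] :
    ∫ y, conv f ω y ∂μ = ∫ z, ω z * ∫ y, f (y - z) ∂μ := by
  have joint : Integrable (uncurry fun z y => ω z * f (y - z)) (volume.prod μ) :=
    integrable_mul_comp_of_isBounded (hω.comp_fst μ) hf hfb (φ := fun p => p.2 - p.1)
      (by fun_prop)
  simp only [conv_eq_integral_mul_comp_sub, ← integral_integral_swap joint, integral_const_mul]

lemma integral_conv_of_even (hf : Measurable f) (hfb : IsBounded (range f)) (hω : Integrable ω)
    (hωe : ω.Even) (μ : Measure ℝ) [IsFiniteMeasure μ] :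
    ∫ y, conv f ω y ∂μ =
      (∫ x in Ioi 0, ω x * ∫ y, f (y + x) ∂μ) + ∫ x in Ioi 0, ω x * ∫ y, f (y - x) ∂μ := by
  rw [integral_conv hf hfb hω, integral_eq_setIntegral_Ioi_comp_neg_add
    (integrable_mul_integral_comp_of_isBounded hω hf hfb (by fun_prop))]
  simp only [hωe _, sub_neg_eq_add]

lemma setIntegral_Ioi_zero_of_even (hω : Integrable ω) (hωe : ω.Even) :
    ∫ x in Ioi 0, ω x = (∫ x, ω x) / 2 := by
  rw [integral_eq_setIntegral_Ioi_comp_neg_add hω]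
  simp only [hωe _, add_self_div_two]

lemma setIntegral_Ioi_mul_sInteg (hω : Integrable ω) (hωe : ω.Even)
    (hf : Monotone f) (hfb : IsBounded (range f)) (hg : Monotone g) (hgb : IsBounded (range g))
    (x₁ x₂ : ℝ) :
    ∫ x in Ioi 0, ω x * sInteg f (fun y => rlim g x₁ - g (y - x)) x₂ (x₁ + x) =
      (∫ x in Ioi 0, ω x * ∫ y in Iic x₁, f (y + x) ∂(stieltjesOf g)) +
        (∫ x in Ioi 0, ω x * ∫ y in Iic x₂, g (y - x) ∂(stieltjesOf f)) -
        (∫ x, ω x) / 2 * (rlim f x₂ * rlim g x₁ - limBot f * limBot g) := by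
  have := isFiniteMeasure_stieltjesOf hf hfb
  have := isFiniteMeasure_stieltjesOf hg hgb
  have hfi : IntegrableOn (fun x => ω x * ∫ y in Iic x₁, f (y + x) ∂(stieltjesOf g)) (Ioi 0) :=
    integrable_mul_integral_comp_of_isBounded hω.integrableOn hf.measurable hfb (by fun_prop)
  have hgi : IntegrableOn (fun x => ω x * ∫ y in Iic x₂, g (y - x) ∂(stieltjesOf f)) (Ioi 0) :=
    integrable_mul_integral_comp_of_isBounded hω.integrableOn hg.measurable hgb (by fun_prop)
  rw [← setIntegral_Ioi_zero_of_even hω hωe, ← integral_mul_const, ← integral_add hfi hgi,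
    ← integral_sub (by exact hfi.add hgi) (hω.integrableOn.mul_const _)]
  refine integral_congr_ae (ae_restrict_of_ae ?_)
  filter_upwards [
    ae_ae_continuousAt_comp_of_injective hf volume (stieltjesOf g)
      (φ := fun x y => y + x) (by fun_prop) add_right_injective,
    ae_ae_continuousAt_comp_of_injective hg volume (stieltjesOf f)
      (φ := fun x y => y - x) (by fun_prop) fun y => sub_right_injective] with x hfx hgx
  rw [sInteg_rlim_sub_comp_sub hf hfb hg hgb hfx hgx]
  ring

theorem spatial_fixed_point_integration_general {hF hG : ℝ → ℝ} (hω : Integrable ω)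
    (hωe : ω.Even) (hf : Monotone f) (hfb : IsBounded (range f)) (hg : Monotone g)
    (hgb : IsBounded (range g)) (hFmono : Monotone hF) (hGmono : Monotone hG)
    (hGc : ∀ x, g x ∈ Icc (llim hG (conv f ω x)) (rlim hG (conv f ω x)))
    (hFc : ∀ x, f x ∈ Icc (llim hF (conv g ω x)) (rlim hF (conv g ω x))) (x₁ x₂ : ℝ) :
    (∫ u in limBot g..rlim g x₁, ginv hG u) + (∫ v in limBot f..rlim f x₂, ginv hF v) -
      (∫ x, ω x) * (rlim f x₂ * rlim g x₁ - limBot f * limBot g) = Xi ω f g x₁ x₂ := by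
  have := isFiniteMeasure_stieltjesOf hf hfb
  have := isFiniteMeasure_stieltjesOf hg hgb
  rw [integral_ginv_eq_setIntegral_stieltjesOf hg hgb.bddBelow hGmono
      (continuous_conv hf hfb hω) hGc,
    integral_ginv_eq_setIntegral_stieltjesOf hf hfb.bddBelow hFmono
      (continuous_conv hg hgb hω) hFc,
    integral_conv_of_even hf.measurable hfb hω hωe, integral_conv_of_even hg.measurable hgb hω hωe,
    Xi, setIntegral_Ioi_mul_sInteg hω hωe hf hfb hg hgb,
    setIntegral_Ioi_mul_sInteg hω hωe hg hgb hf hfb]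
  ring

lemma MemPsi.isBounded_range (hf : MemPsi f) : IsBounded (range f) :=
  (Metric.isBounded_Icc 0 1).subset (range_subset_iff.2 hf.2)

/-- **Spatial fixed point integration identity.** -/
theorem spatial_fixed_point_integration
    (ω f g hF hG : ℝ → ℝ)
    (hω : IsAveragingKernel ω) (hfΨ : MemPsi f) (hgΨ : MemPsi g)
    (hFmono : Monotone hF) (hGmono : Monotone hG)
    (hGc : ∀ x, g x ∈ Icc (llim hG (conv f ω x)) (rlim hG (conv f ω x)))
    (hFc : ∀ x, f x ∈ Icc (llim hF (conv g ω x)) (rlim hF (conv g ω x)))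
    (x₁ x₂ : ℝ) :
    (∫ u in (limBot g)..(rlim g x₁), ginv hG u) +
      (∫ v in (limBot f)..(rlim f x₂), ginv hF v) -
      rlim f x₂ * rlim g x₁ + limBot f * limBot g = Xi ω f g x₁ x₂ := by
  rw [← spatial_fixed_point_integration_general hω.2.2.2.1 hω.1 hfΨ.1 hfΨ.isBounded_range hgΨ.1
    hgΨ.isBounded_range hFmono hGmono hGc hFc, hω.2.2.2.2]
  ring
end
end
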